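/- For all integers i, j and every integer k ≥ 1, the bimoment determinants satisfy the bilinear identity E_{k+1}^{(i,j−1)} F_{k−1}^{(i+1,j)} = F_k^{(i,j−1)} E_k^{(i+1,j)} − G_k^{(j−1,i+1)} G_k^{(i,j)}. -/

import Mathlib

open Finset

/-- Single moments `α_i = Σ_p ζ_p^i a_p`. -/
noncomputable def alphaM (n : ℕ) (ζ a : Fin n → ℝ) (i : ℤ) : ℝ :=
  ∑ p : Fin n, ζ p ^ i * a p

/-- Bimoments `I_{i,j} = Σ_p Σ_q ζ_p^i ζ_q^j / (ζ_p + ζ_q) a_p a_q`. -/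
noncomputable def Imom (n : ℕ) (ζ a : Fin n → ℝ) (i j : ℤ) : ℝ :=
  ∑ p : Fin n, ∑ q : Fin n, ζ p ^ i * ζ q ^ j / (ζ p + ζ q) * (a p * a q)

/-- `F_k^{(i,j)} = det (I_{i+r,j+s})_{0 ≤ r,s ≤ k-1}`, with `F_0 = 1` and `F_k = 0` for `k < 0`. -/
noncomputable def Fdet (n : ℕ) (ζ a : Fin n → ℝ) (i j k : ℤ) : ℝ :=
  if k < 0 then 0
  else Matrix.det (Matrix.of fun r s : Fin k.toNat =>
    Imom n ζ a (i + ((r : ℕ) : ℤ)) (j + ((s : ℕ) : ℤ)))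

/-- `G_k^{(i,j)}`: first column `(α_{i-1}, …, α_{i+k-2})ᵀ`, remaining block
`(I_{i+r,j+s})_{0 ≤ r ≤ k-1, 0 ≤ s ≤ k-2}`; `G_1 = α_{i-1}` and `G_k = 0` for `k < 1`. -/
noncomputable def Gdet (n : ℕ) (ζ a : Fin n → ℝ) (i j k : ℤ) : ℝ :=
  if k < 1 then 0
  else Matrix.det (Matrix.of fun r s : Fin k.toNat =>
    if (s : ℕ) = 0 then alphaM n ζ a (i - 1 + ((r : ℕ) : ℤ))
    else Imom n ζ a (i + ((r : ℕ) : ℤ)) (j + (((s : ℕ) - 1 : ℕ) : ℤ)))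

/-- `E_k^{(i,j)}`: `(1,1)` entry `0`, first row `(0, α_{j-1}, …, α_{j+k-3})`, first column
`(0, α_{i-1}, …, α_{i+k-3})ᵀ`, remaining block `(I_{i+r,j+s})_{0 ≤ r,s ≤ k-2}`;
`E_k = 0` for `k < 2`. -/
noncomputable def Edet (n : ℕ) (ζ a : Fin n → ℝ) (i j k : ℤ) : ℝ :=
  if k < 2 then 0
  else Matrix.det (Matrix.of fun r s : Fin k.toNat =>
    if (r : ℕ) = 0 then
      (if (s : ℕ) = 0 then 0 else alphaM n ζ a (j - 1 + (((s : ℕ) - 1 : ℕ) : ℤ)))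
    else if (s : ℕ) = 0 then alphaM n ζ a (i - 1 + (((r : ℕ) - 1 : ℕ) : ℤ))
    else Imom n ζ a (i + (((r : ℕ) - 1 : ℕ) : ℤ)) (j + (((s : ℕ) - 1 : ℕ) : ℤ)))

/-! Put the row and the column of single moments around a window of bimoments, with corner `0`; the
result is the matrix of `E_{k+1}^{(i,j-1)}`. Deleting its first row or its second row, together
with its first column or its second column, leaves the matrices of `F_k`, `E_k` and, up to a
transposition, the two `G_k`, and deleting the first two rows and columns leaves that of `F_{k-1}`.
So the bilinear identity is the Desnanot–Jacobi identity for this matrix. -/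

open Matrix

section DesnanotJacobi

variable {R : Type*} [CommRing R] {l m : Type*} [Fintype l] [Fintype m] [DecidableEq l]
  [DecidableEq m]

theorem mul_fromBlocks_adjugate (A : Matrix (l ⊕ m) (l ⊕ m) R) :
    A * fromBlocks A.adjugate.toBlocks₁₁ 0 A.adjugate.toBlocks₂₁ 1 =
      fromBlocks (A.det • 1) A.toBlocks₁₂ 0 A.toBlocks₂₂ := by
  have hblocks := A.mul_adjugate
  rw [← fromBlocks_toBlocks A.adjugate, ← fromBlocks_one, fromBlocks_smul] at hblocks
  nth_rw 1 [← fromBlocks_toBlocks A] at hblocks ⊢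
  rw [fromBlocks_multiply, fromBlocks_inj] at hblocks
  obtain ⟨h₁₁, -, h₂₁, -⟩ := hblocks
  simp only [fromBlocks_multiply, h₁₁, h₂₁, Matrix.mul_zero, Matrix.mul_one, zero_add, smul_zero]

theorem det_mul_det_adjugate_toBlocks₁₁ (A : Matrix (l ⊕ m) (l ⊕ m) R) :
    A.det * A.adjugate.toBlocks₁₁.det = A.det ^ Fintype.card l * A.toBlocks₂₂.det := by
  simpa using congrArg det (mul_fromBlocks_adjugate A)

theorem det_adjugate_toBlocks₁₁ [Nonempty l] (A : Matrix (l ⊕ m) (l ⊕ m) R) :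
    A.adjugate.toBlocks₁₁.det = A.det ^ (Fintype.card l - 1) * A.toBlocks₂₂.det := by
  -- The determinant cancels for the generic matrix `X`, which specializes to `A`.
  let X := mvPolynomialX (l ⊕ m) (l ⊕ m) ℤ
  have generic : X.adjugate.toBlocks₁₁.det = X.det ^ (Fintype.card l - 1) * X.toBlocks₂₂.det := by
    apply mul_left_cancel₀ (det_mvPolynomialX_ne_zero (l ⊕ m) ℤ)
    rw [det_mul_det_adjugate_toBlocks₁₁, ← mul_assoc, mul_pow_sub_one Fintype.card_ne_zero]
  let f := MvPolynomial.aeval (R := ℤ) fun p : (l ⊕ m) × (l ⊕ m) => A p.1 p.2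
  have hX : f.mapMatrix X = A := mvPolynomialX_mapMatrix_aeval ℤ A
  have hadj : f.mapMatrix X.adjugate.toBlocks₁₁ = A.adjugate.toBlocks₁₁ := by
    rw [← hX, ← AlgHom.map_adjugate]
    rfl
  have hblock : f.mapMatrix X.toBlocks₂₂ = A.toBlocks₂₂ := by
    rw [← hX]
    rfl
  simpa only [map_mul, map_pow, AlgHom.map_det, hX, hadj, hblock] using congrArg f generic

theorem desnanot_jacobi {k : ℕ} (A : Matrix (Fin (k + 2)) (Fin (k + 2)) R) :
    A.det * ((A.submatrix Fin.succ Fin.succ).submatrix Fin.succ Fin.succ).det =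
      (A.submatrix Fin.succ Fin.succ).det * (A.submatrix (Fin.succAbove 1) (Fin.succAbove 1)).det -
        (A.submatrix (Fin.succAbove 1) Fin.succ).det *
          (A.submatrix Fin.succ (Fin.succAbove 1)).det := by
  let e : Fin 2 ⊕ Fin k ≃ Fin (k + 2) := finSumFinEquiv.trans (finCongr (Nat.add_comm 2 k))
  have he₀ : e (.inl 0) = 0 := by ext; simp [e]
  have he₁ : e (.inl 1) = 1 := by ext; simp [e]
  have he (r : Fin k) : e (.inr r) = r.succ.succ := by ext; simp [e]
  have hminor := det_adjugate_toBlocks₁₁ (A.submatrix e e)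
  have hblock : (A.submatrix e e).toBlocks₂₂ =
      (A.submatrix Fin.succ Fin.succ).submatrix Fin.succ Fin.succ := by
    ext r s
    simp [toBlocks₂₂, he]
  rw [hblock, det_submatrix_equiv_self, Fintype.card_fin, pow_one] at hminor
  rw [← hminor, adjugate_submatrix_equiv_self, det_fin_two]
  simp [toBlocks₁₁, he₀, he₁, adjugate_fin_succ_eq_det_submatrix]

end DesnanotJacobi

section Bordered

variable {R : Type*}

/-- The bordered matrix `[[c, v], [u, M]]`: the matrix `M` with the row `v` on top, the column `u`
on the left and the entry `c` in the corner. It is indexed by `Fin` rather than by a sum type so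
that it can be compared with the determinants `E_k`. -/
def borderedMatrix {k l : ℕ} (c : R) (v : Fin l → R) (u : Fin k → R)
    (M : Matrix (Fin k) (Fin l) R) : Matrix (Fin (k + 1)) (Fin (l + 1)) R :=
  of (vecCons (vecCons c v) fun r => vecCons (u r) (M r))

theorem borderedMatrix_submatrix_succ_succ {k l : ℕ} (c : R) (v : Fin l → R) (u : Fin k → R)
    (M : Matrix (Fin k) (Fin l) R) :
    (borderedMatrix c v u M).submatrix Fin.succ Fin.succ = M := rfl

theorem borderedMatrix_submatrix_succAbove_one {k l : ℕ} (c : R) (v : Fin (l + 1) → R)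
    (u : Fin (k + 1) → R) (M : Matrix (Fin (k + 1)) (Fin (l + 1)) R) :
    (borderedMatrix c v u M).submatrix (Fin.succAbove 1) (Fin.succAbove 1) =
      borderedMatrix c (vecTail v) (vecTail u) (M.submatrix Fin.succ Fin.succ) := by
  ext r s
  cases r using Fin.cases <;> cases s using Fin.cases <;> simp [borderedMatrix, vecTail]

theorem borderedMatrix_submatrix_succ_succAbove_one {k l : ℕ} (c : R) (v : Fin (l + 1) → R)
    (u : Fin k → R) (M : Matrix (Fin k) (Fin (l + 1)) R) :
    (borderedMatrix c v u M).submatrix Fin.succ (Fin.succAbove 1) = M.updateCol 0 u := by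
  ext r s
  cases s using Fin.cases <;> simp [borderedMatrix]

theorem borderedMatrix_submatrix_succAbove_one_succ {k l : ℕ} (c : R) (v : Fin l → R)
    (u : Fin (k + 1) → R) (M : Matrix (Fin (k + 1)) (Fin l) R) :
    (borderedMatrix c v u M).submatrix (Fin.succAbove 1) Fin.succ = M.updateRow 0 v := by
  ext r s
  cases r using Fin.cases <;> simp [borderedMatrix]

theorem det_borderedMatrix_mul_det_submatrix_succ [CommRing R] {k : ℕ} (c : R)
    (v u : Fin (k + 1) → R) (M : Matrix (Fin (k + 1)) (Fin (k + 1)) R) :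
    (borderedMatrix c v u M).det * (M.submatrix Fin.succ Fin.succ).det =
      M.det * (borderedMatrix c (vecTail v) (vecTail u) (M.submatrix Fin.succ Fin.succ)).det -
        (M.updateRow 0 v).det * (M.updateCol 0 u).det := by
  simpa only [borderedMatrix_submatrix_succ_succ, borderedMatrix_submatrix_succAbove_one,
    borderedMatrix_submatrix_succ_succAbove_one, borderedMatrix_submatrix_succAbove_one_succ]
    using desnanot_jacobi (borderedMatrix c v u M)

end Bordered

section Bimoments

variable {R : Type*}

/-- The window `(α_i, …, α_{i+k-1})` of a sequence of single moments. -/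
def momentVector (α : ℤ → R) (i : ℤ) (k : ℕ) : Fin k → R :=
  fun r => α (i + (r : ℕ))

/-- The window `(I_{i+r,j+s})_{0 ≤ r,s ≤ k-1}` of an array of bimoments. -/
def bimomentMatrix (I : ℤ → ℤ → R) (i j : ℤ) (k : ℕ) : Matrix (Fin k) (Fin k) R :=
  of fun r s => I (i + (r : ℕ)) (j + (s : ℕ))

theorem vecTail_momentVector (α : ℤ → R) (i : ℤ) (k : ℕ) :
    vecTail (momentVector α i (k + 1)) = momentVector α (i + 1) k := by
  ext r
  simp [vecTail, momentVector, add_assoc, add_comm (1 : ℤ)]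

theorem bimomentMatrix_submatrix_succ (I : ℤ → ℤ → R) (i j : ℤ) (k : ℕ) :
    (bimomentMatrix I i j (k + 1)).submatrix Fin.succ Fin.succ =
      bimomentMatrix I (i + 1) (j + 1) k := by
  ext r s
  simp [bimomentMatrix, add_assoc, add_comm (1 : ℤ)]

/-- With `α` and `β` distinct and `I` not symmetric this covers the bimoments of two measures. -/
theorem stmt_7_general [CommRing R] (c : R) (α β : ℤ → R) (I : ℤ → ℤ → R) (i₀ j₀ i j : ℤ)
    (k : ℕ) :
    (borderedMatrix c (momentVector β j₀ (k + 1)) (momentVector α i₀ (k + 1))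
        (bimomentMatrix I i j (k + 1))).det * (bimomentMatrix I (i + 1) (j + 1) k).det =
      (bimomentMatrix I i j (k + 1)).det *
          (borderedMatrix c (momentVector β (j₀ + 1) k) (momentVector α (i₀ + 1) k)
            (bimomentMatrix I (i + 1) (j + 1) k)).det -
        ((bimomentMatrix I i j (k + 1)).updateRow 0 (momentVector β j₀ (k + 1))).det *
          ((bimomentMatrix I i j (k + 1)).updateCol 0 (momentVector α i₀ (k + 1))).det := by
  simpa only [vecTail_momentVector, bimomentMatrix_submatrix_succ] using
    det_borderedMatrix_mul_det_submatrix_succ c (momentVector β j₀ (k + 1))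
      (momentVector α i₀ (k + 1)) (bimomentMatrix I i j (k + 1))

end Bimoments

section Determinants

variable (n : ℕ) (ζ a : Fin n → ℝ) (i j : ℤ) (k : ℕ)

theorem Imom_comm : Imom n ζ a i j = Imom n ζ a j i := by
  rw [Imom, Finset.sum_comm]
  refine Finset.sum_congr rfl fun p _ => Finset.sum_congr rfl fun q _ => ?_
  rw [add_comm (ζ q), mul_comm (ζ q ^ i), mul_comm (a q)]

theorem bimomentMatrix_Imom_transpose :
    (bimomentMatrix (Imom n ζ a) i j k)ᵀ = bimomentMatrix (Imom n ζ a) j i k := by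
  ext r s
  exact Imom_comm ..

theorem Fdet_natCast : Fdet n ζ a i j k = (bimomentMatrix (Imom n ζ a) i j k).det :=
  if_neg (by lia)

theorem Gdet_eq_det_updateCol :
    Gdet n ζ a i j (k + 1 : ℕ) =
      ((bimomentMatrix (Imom n ζ a) i (j - 1) (k + 1)).updateCol 0
        (momentVector (alphaM n ζ a) (i - 1) (k + 1))).det := by
  rw [Gdet, if_neg (by lia)]
  congr 1
  ext r s
  cases s using Fin.cases <;> simp [bimomentMatrix, momentVector]

theorem Gdet_eq_det_updateRow :
    Gdet n ζ a i j (k + 1 : ℕ) =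
      ((bimomentMatrix (Imom n ζ a) (j - 1) i (k + 1)).updateRow 0
        (momentVector (alphaM n ζ a) (i - 1) (k + 1))).det := by
  rw [Gdet_eq_det_updateCol, ← det_transpose, ← updateRow_transpose, bimomentMatrix_Imom_transpose]

theorem Edet_natCast_add_one :
    Edet n ζ a i j (k + 1 : ℕ) =
      (borderedMatrix 0 (momentVector (alphaM n ζ a) (j - 1) k)
        (momentVector (alphaM n ζ a) (i - 1) k) (bimomentMatrix (Imom n ζ a) i j k)).det := by
  rw [Edet]
  split_ifs with hk
  · obtain rfl : k = 0 := by lia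
    simp [borderedMatrix]
  · congr 1
    ext r s
    cases r using Fin.cases <;> cases s using Fin.cases <;>
      simp [borderedMatrix, bimomentMatrix, momentVector]

end Determinants

/-- Lemma 2.8, identity (2.16): for all `i, j ∈ ℤ` and `k ≥ 1`,
`E_{k+1}^{(i,j-1)} F_{k-1}^{(i+1,j)} = F_k^{(i,j-1)} E_k^{(i+1,j)} - G_k^{(j-1,i+1)} G_k^{(i,j)}`. -/
theorem stmt_7 (n : ℕ) (hn : 1 ≤ n) (ζ a : Fin n → ℝ)
    (hζ0 : ∀ p, 0 < ζ p) (hζmono : StrictMono ζ) (ha : ∀ p, 0 < a p)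
    (i j k : ℤ) (hk : 1 ≤ k) :
    Edet n ζ a i (j - 1) (k + 1) * Fdet n ζ a (i + 1) j (k - 1) =
      Fdet n ζ a i (j - 1) k * Edet n ζ a (i + 1) j k -
        Gdet n ζ a (j - 1) (i + 1) k * Gdet n ζ a i j k := by
  obtain ⟨m, rfl⟩ : ∃ m : ℕ, k = (m + 1 : ℕ) := ⟨(k - 1).toNat, by lia⟩
  have hpred : ((m + 1 : ℕ) : ℤ) - 1 = m := by simp
  rw [← Nat.cast_succ (m + 1), hpred, Edet_natCast_add_one, Edet_natCast_add_one,
    Fdet_natCast, Fdet_natCast, Gdet_eq_det_updateRow, Gdet_eq_det_updateCol]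
  simpa using stmt_7_general 0 (alphaM n ζ a) (alphaM n ζ a) (Imom n ζ a) (i - 1) (j - 1 - 1) i
    (j - 1) m
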